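/- Let X be a connected chordal bipartite T_2-free graph, let α be a vertex of X, and let (Ω,S) be a coherent configuration on the vertex set Ω of X compatible with X in which α is distinguished. Then for every fiber Δ of (Ω,S), the equivalence relation on Δ under which two vertices are equivalent if and only if they have the same neighborhood in X has at most 2 classes; in particular, Δ meets at most 2 classes of the twin relation of X (vertices β, β' are X-twins if every vertex other than β and β' is adjacent to both of them or to neither). -/

import Mathlib

open SimpleGraph

/-- A coherent configuration on a set `Ω`: a partition `S` of `Ω × Ω` into nonempty
binary relations such that the diagonal is a union of elements of `S`, the converse of
every element of `S` belongs to `S`, and the intersection numbers are well defined. -/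
structure CoherentConfiguration (Ω : Type*) where
  S : Set (Set (Ω × Ω))
  nonempty_mem : ∀ s ∈ S, s.Nonempty
  partition : ∀ p : Ω × Ω, ∃! s, s ∈ S ∧ p ∈ s
  diag_union : ∀ s ∈ S, (∃ p ∈ s, p.1 = p.2) → ∀ p ∈ s, p.1 = p.2
  converse_mem : ∀ s ∈ S, {p : Ω × Ω | (p.2, p.1) ∈ s} ∈ S
  regularity : ∀ r ∈ S, ∀ s ∈ S, ∀ t ∈ S, ∀ p ∈ t, ∀ q ∈ t,
    {γ : Ω | (p.1, γ) ∈ r ∧ (γ, p.2) ∈ s}.ncard =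
      {γ : Ω | (q.1, γ) ∈ r ∧ (γ, q.2) ∈ s}.ncard

/-- `Δ` is a fiber of the coherent configuration, i.e. `{(δ,δ) : δ ∈ Δ} ∈ S`. -/
def CoherentConfiguration.IsFiber {Ω : Type*} (C : CoherentConfiguration Ω)
    (Δ : Set Ω) : Prop :=
  {p : Ω × Ω | p.1 = p.2 ∧ p.1 ∈ Δ} ∈ C.S

/-- The coherent configuration is compatible with the graph `X`: the arc set of `X`
is a union of elements of `S`. -/
def CoherentConfiguration.Compatible {Ω : Type*} (C : CoherentConfiguration Ω)
    (X : SimpleGraph Ω) : Prop :=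
  ∀ s ∈ C.S, (∃ p ∈ s, X.Adj p.1 p.2) → ∀ p ∈ s, X.Adj p.1 p.2

/-- The vertex `α` is distinguished in the coherent configuration: `{(α,α)} ∈ S`. -/
def CoherentConfiguration.Distinguished {Ω : Type*} (C : CoherentConfiguration Ω)
    (α : Ω) : Prop :=
  ({(α, α)} : Set (Ω × Ω)) ∈ C.S

/-- `P`, `Q` form a bipartition of the graph `X`. -/
def IsBipartition {V : Type*} (X : SimpleGraph V) (P Q : Set V) : Prop :=
  (∀ v, v ∈ P ∨ v ∈ Q) ∧ Disjoint P Q ∧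
    ∀ u v, X.Adj u v → (u ∈ P ∧ v ∈ Q) ∨ (u ∈ Q ∧ v ∈ P)

/-- `X` contains no induced cycle of length at least 6. -/
def NoLongInducedCycle {V : Type*} (X : SimpleGraph V) : Prop :=
  ∀ n : ℕ, 6 ≤ n → IsEmpty (SimpleGraph.cycleGraph n ↪g X)

/-- The equivalence relation `e_{Δ,Γ}` on `Δ`: two vertices of `Δ` are equivalent iff
they have the same neighbors in `Γ`; viewed as a set of pairs. -/
def eRel {V : Type*} (X : SimpleGraph V) (Δ Γ : Set V) : Set (V × V) :=
  {p | p.1 ∈ Δ ∧ p.2 ∈ Δ ∧ X.neighborSet p.1 ∩ Γ = X.neighborSet p.2 ∩ Γ}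

/-- The number `‖e_{Δ,Γ}‖` of classes of the equivalence relation `e_{Δ,Γ}`,
i.e. the number of distinct sets of the form `N(δ) ∩ Γ` for `δ ∈ Δ`. -/
noncomputable def numClasses {V : Type*} (X : SimpleGraph V) (Δ Γ : Set V) : ℕ :=
  ((fun δ => X.neighborSet δ ∩ Γ) '' Δ).ncard

/-- The bipartite claw `T₂`: the tree on 7 vertices obtained from the star `K_{1,3}`
by subdividing each edge once (center 0, middle vertices 1,2,3, leaves 4,5,6). -/
def bipartiteClaw : SimpleGraph (Fin 7) :=
  SimpleGraph.fromRel (fun a b =>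
    (a, b) ∈ ({(0, 1), (0, 2), (0, 3), (1, 4), (2, 5), (3, 6)} : Set (Fin 7 × Fin 7)))

/-- `X` contains no induced subgraph isomorphic to the bipartite claw `T₂`. -/
def T2Free {V : Type*} (X : SimpleGraph V) : Prop :=
  IsEmpty (bipartiteClaw ↪g X)

/-- Vertices `u`, `v` are `X`-twins: every vertex other than `u` and `v` is adjacent
to both of them or to neither. -/
def IsTwin {V : Type*} (X : SimpleGraph V) (u v : V) : Prop :=
  ∀ w, w ≠ u → w ≠ v → (X.Adj u w ↔ X.Adj v w)

/-! In a pair of fibers the neighborhoods of any two vertices are equal or disjoint: otherwise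
there is an induced path on four vertices alternating between the fibers, and since all vertices
of a fiber have equally many neighbors in the other one, chordality lets us prolong it forever.

The distance from `α` is constant on each fiber. By induction on this distance, a fiber `Δ` has at
most two classes with respect to a fiber `Γ` one level further: vertices of `Δ` in different
classes with a common neighbor one level closer to `α` would span a bipartite claw with a third
class, and otherwise the classes for `Γ` are unions of the classes for the fiber before `Δ`.

Finally, the two-class partitions of `Δ` given by different fibers coincide: by coherence, two that
do not would cross, and four vertices in the four cells lie on an induced 8-cycle. -/

section Finite

variable {ι β γ : Type*} [Finite ι]

theorem ncard_image_le_ncard_image {f : ι → β} {g : ι → γ} {s : Set ι}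
    (h : ∀ x ∈ s, ∀ y ∈ s, f x = f y → g x = g y) : (g '' s).ncard ≤ (f '' s).ncard := by
  obtain rfl | ⟨x₀, _⟩ := s.eq_empty_or_nonempty
  · simp only [Set.image_empty, Set.ncard_empty, le_refl]
  have : Nonempty ι := ⟨x₀⟩
  have hsub : g '' s ⊆ (g ∘ Function.invFunOn f s) '' (f '' s) := by
    rintro _ ⟨x, hx, rfl⟩
    have hex : ∃ y ∈ s, f y = f x := ⟨x, hx, rfl⟩
    exact ⟨f x, Set.mem_image_of_mem f hx,
      h _ (Function.invFunOn_mem hex) _ hx (Function.invFunOn_eq hex)⟩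
  exact (Set.ncard_le_ncard hsub).trans Set.ncard_image_le

theorem ncard_image_le_two_iff {f : ι → β} {s : Set ι} :
    (f '' s).ncard ≤ 2 ↔ ∀ x ∈ s, ∀ y ∈ s, ∀ z ∈ s, f x = f y ∨ f x = f z ∨ f y = f z := by
  rw [← not_lt, Set.two_lt_ncard_iff]
  simp only [Set.mem_image]
  constructor
  · intro h x hx y hy z hz
    by_contra! hne
    exact h ⟨_, _, _, ⟨x, hx, rfl⟩, ⟨y, hy, rfl⟩, ⟨z, hz, rfl⟩, hne⟩
  · rintro h ⟨_, _, _, ⟨x, hx, rfl⟩, ⟨y, hy, rfl⟩, ⟨z, hz, rfl⟩, hxy, hxz, hyz⟩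
    exact (h x hx y hy z hz).elim hxy fun h' => h'.elim hxz hyz

end Finite

section InducedSubgraph

variable {V W : Type*} {X : SimpleGraph V} {H : SimpleGraph W}

theorem injective_of_adj_iff_adj (hH : Function.Injective H.neighborSet) {f : W → V}
    (hf : ∀ a b, X.Adj (f a) (f b) ↔ H.Adj a b) : Function.Injective f := by
  intro a b hab
  refine hH (Set.ext fun c => ?_)
  rw [mem_neighborSet, mem_neighborSet, ← hf, ← hf, hab]

theorem nonempty_embedding_of_adj_iff_adj (hH : Function.Injective H.neighborSet) {f : W → V}
    (hf : ∀ a b, X.Adj (f a) (f b) ↔ H.Adj a b) : Nonempty (H ↪g X) :=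
  ⟨⟨⟨f, injective_of_adj_iff_adj hH hf⟩, hf _ _⟩⟩

theorem cycleGraph_adj_iff_of_lt {n : ℕ} {i j : Fin n} (hij : i < j) :
    (cycleGraph n).Adj i j ↔ (j : ℕ) = i + 1 ∨ (i : ℕ) = 0 ∧ (j : ℕ) + 1 = n := by
  have : (i : ℕ) < j ∧ (j : ℕ) < n := ⟨hij, j.isLt⟩
  rw [cycleGraph_adj', Fin.sub_val_of_le hij.le, Fin.val_sub, Nat.mod_eq_of_lt (by omega)]
  omega

theorem cycleGraph_neighborSet_injective {n : ℕ} (hn : 5 ≤ n) :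
    Function.Injective (cycleGraph n).neighborSet := by
  obtain ⟨m, rfl⟩ := Nat.exists_eq_add_of_le' hn
  intro i j hij
  have hnext : (cycleGraph (m + 5)).Adj j (i + 1) := by
    rw [← mem_neighborSet, ← hij, mem_neighborSet, cycleGraph_adj]
    exact Or.inr (add_sub_cancel_left i 1)
  have hprev : (cycleGraph (m + 5)).Adj j (i - 1) := by
    rw [← mem_neighborSet, ← hij, mem_neighborSet, cycleGraph_adj]
    exact Or.inl (sub_sub_cancel i 1)
  rw [cycleGraph_adj] at hnext hprev
  by_contra hne
  have hnext' : j - (i + 1) = 1 := hnext.resolve_right fun h =>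
    hne (add_right_cancel (eq_add_of_sub_eq' h))
  have hprev' : i - 1 - j = 1 := hprev.resolve_left fun h =>
    hne ((sub_eq_iff_eq_add.1 h).trans (add_sub_cancel 1 i)).symm
  have hfour : (1 + 1 + 1 + 1 : Fin (m + 5)) = 0 := by
    calc (1 + 1 + 1 + 1 : Fin (m + 5)) = j - (i + 1) + (i - 1 - j) + 1 + 1 := by
          rw [hnext', hprev']
      _ = 0 := by abel
  simp [Fin.ext_iff, Fin.val_add, Nat.mod_eq_of_lt (show 4 < m + 5 by omega)] at hfour

instance : DecidableRel bipartiteClaw.Adj := fun a b =>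
  decidable_of_iff (a ≠ b ∧
    ((a, b) ∈ [((0, 1) : Fin 7 × Fin 7), (0, 2), (0, 3), (1, 4), (2, 5), (3, 6)] ∨
      (b, a) ∈ [((0, 1) : Fin 7 × Fin 7), (0, 2), (0, 3), (1, 4), (2, 5), (3, 6)])) <| by
    simp only [bipartiteClaw, fromRel_adj, Set.mem_insert_iff, Set.mem_singleton_iff,
      List.mem_cons, List.not_mem_nil, or_false]

theorem bipartiteClaw_neighborSet_injective : Function.Injective bipartiteClaw.neighborSet := by
  have hne : ∀ i j, (∀ k, bipartiteClaw.Adj i k ↔ bipartiteClaw.Adj j k) → i = j := by decide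
  exact fun i j hij => hne i j (Set.ext_iff.mp hij)

end InducedSubgraph

/-- `X` is bipartite and has no induced cycle of length at least `6`. -/
structure IsChordalBipartite {V : Type*} (X : SimpleGraph V) : Prop where
  isBipartite : X.IsBipartite
  noLongInducedCycle : NoLongInducedCycle X

/-- The vertices `v 0, …, v (n - 1)` form an induced path of `X` in this order; the values of `v`
beyond `n - 1` are irrelevant. -/
def IsInducedPath {V : Type*} (X : SimpleGraph V) (n : ℕ) (v : ℕ → V) : Prop :=
  ∀ i j, i < j → j < n → (X.Adj (v i) (v j) ↔ j = i + 1)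

section Graph

variable {V : Type*} {X : SimpleGraph V}

theorem IsBipartition.isBipartite {P Q : Set V} (h : IsBipartition X P Q) : X.IsBipartite :=
  IsBipartiteWith.isBipartite ⟨h.2.1, fun u v => h.2.2 u v⟩

namespace IsInducedPath

variable {m n : ℕ} {v : ℕ → V}

theorem mono (hv : IsInducedPath X n v) (hmn : m ≤ n) : IsInducedPath X m v :=
  fun i j hij hj => hv i j hij (hj.trans_le hmn)

theorem adj_succ (hv : IsInducedPath X n v) {i : ℕ} (hi : i + 1 < n) : X.Adj (v i) (v (i + 1)) :=
  (hv i (i + 1) i.lt_succ_self hi).2 rfl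

theorem ne_of_lt (hv : IsInducedPath X n v) (hn : 4 ≤ n) {i j : ℕ} (hij : i < j) (hj : j < n) :
    v i ≠ v j := by
  intro heq
  rcases Nat.lt_or_ge (j + 1) n with hj' | hj'
  · have := (hv i (j + 1) (by omega) hj').1 (heq ▸ hv.adj_succ hj')
    omega
  · rcases Nat.eq_zero_or_pos i with rfl | hi
    · have := (hv 1 j (by omega) hj).1 (heq ▸ (hv.adj_succ (by omega)).symm)
      omega
    · obtain ⟨k, rfl⟩ := Nat.exists_eq_succ_of_ne_zero hi.ne'
      have := (hv k j (by omega) hj).1 (heq ▸ hv.adj_succ (by omega))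
      omega

theorem le_card [Finite V] (hv : IsInducedPath X n v) (hn : 4 ≤ n) : n ≤ Nat.card V := by
  have hinj : Function.Injective fun i : Fin n => v i := by
    intro i j heq
    by_contra hne
    rcases lt_or_gt_of_ne hne with hlt | hlt
    · exact hv.ne_of_lt hn hlt j.isLt heq
    · exact hv.ne_of_lt hn hlt i.isLt heq.symm
  simpa only [Nat.card_fin] using Nat.card_le_card_of_injective _ hinj

end IsInducedPath

theorem IsInducedPath.cycleGraph_adj_iff {n : ℕ} {v : ℕ → V} {w : V} (hv : IsInducedPath X n v)
    (hw : ∀ i < n, X.Adj w (v i) ↔ i = 0 ∨ i + 1 = n) (i j : Fin (n + 1)) :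
    X.Adj (Nat.casesOn i w v) (Nat.casesOn j w v) ↔ (cycleGraph (n + 1)).Adj i j := by
  wlog hij : i < j generalizing i j
  · rcases (not_lt.1 hij).eq_or_lt with rfl | hji
    · simp only [SimpleGraph.irrefl]
    · rw [X.adj_comm, (cycleGraph (n + 1)).adj_comm, this j i hji]
  rw [cycleGraph_adj_iff_of_lt hij]
  obtain ⟨j, hj⟩ := j
  obtain ⟨i, hi⟩ := i
  rw [Fin.mk_lt_mk] at hij
  match i, j, hij with
  | 0, j + 1, _ =>
    exact (hw j (by omega)).trans (by dsimp only; omega)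
  | i + 1, j + 1, hij =>
    exact (hv i j (by omega) (by omega)).trans (by dsimp only; omega)

theorem NoLongInducedCycle.false_of_isInducedPath (hX : NoLongInducedCycle X) {n : ℕ} (hn : 5 ≤ n)
    {v : ℕ → V} (hv : IsInducedPath X n v) {w : V}
    (hw : ∀ i < n, X.Adj w (v i) ↔ i = 0 ∨ i + 1 = n) : False :=
  not_isEmpty_iff.2 (nonempty_embedding_of_adj_iff_adj
    (cycleGraph_neighborSet_injective (by omega)) (hv.cycleGraph_adj_iff hw)) (hX _ (by omega))

theorem exists_bool_coloring_of_isBipartite (hX : X.IsBipartite) :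
    ∃ c : V → Bool, ∀ a b, X.Adj a b → c b = !c a :=
  ⟨hX.toColoring (by simp), fun _ _ hab => Bool.eq_not.2 (Coloring.valid _ hab).symm⟩

theorem IsInducedPath.eq_zero_of_adj (hX : IsChordalBipartite X) {n : ℕ} {v : ℕ → V}
    (hv : IsInducedPath X n v) {w : V} (h0 : X.Adj w (v 0)) (h2 : ¬X.Adj w (v 2)) {j : ℕ}
    (hj : j < n) (hwj : X.Adj w (v j)) : j = 0 := by
  obtain ⟨c, hc⟩ := exists_bool_coloring_of_isBipartite hX.isBipartite
  induction j using Nat.strong_induction_on with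
  | _ j ih =>
    match j with
    | 0 => rfl
    | 1 =>
      have hcolor := hc _ _ hwj
      rw [hc _ _ (hv.adj_succ hj), hc _ _ h0] at hcolor
      simp at hcolor
    | 2 => exact (h2 hwj).elim
    | 3 =>
      have hcolor := hc _ _ hwj
      rw [hc _ _ (hv.adj_succ hj), hc _ _ (hv.adj_succ (i := 1) (by omega)),
        hc _ _ (hv.adj_succ (i := 0) (by omega)), hc _ _ h0] at hcolor
      simp at hcolor
    | j + 4 =>
      refine (hX.noLongInducedCycle.false_of_isInducedPath (by omega) (hv.mono hj) (w := w)
        fun i hi => ⟨fun hwi => ?_, ?_⟩).elim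
      · rcases (Nat.lt_succ_iff.1 hi).lt_or_eq with hlt | rfl
        · exact Or.inl (ih i hlt (by omega) hwi)
        · exact Or.inr rfl
      · rintro (rfl | hi)
        · exact h0
        · exact Nat.succ_injective hi ▸ hwj

theorem IsInducedPath.cons (hX : IsChordalBipartite X) {n : ℕ} {v : ℕ → V}
    (hv : IsInducedPath X n v) {w : V} (h0 : X.Adj w (v 0)) (h2 : ¬X.Adj w (v 2)) :
    IsInducedPath X (n + 1) (fun i => Nat.casesOn i w v) := by
  intro i j hij hj
  match i, j, hij with
  | 0, j + 1, _ =>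
    have hadj : X.Adj w (v j) ↔ j = 0 :=
      ⟨hv.eq_zero_of_adj hX h0 h2 (by omega), fun h => h ▸ h0⟩
    exact hadj.trans (by omega)
  | i + 1, j + 1, _ => exact (hv i j (by omega) (by omega)).trans (by omega)

theorem IsChordalBipartite.false_of_octagon (hX : IsChordalBipartite X) {u : Fin 8 → V}
    (hadj : ∀ i, X.Adj (u i) (u (i + 1))) (hnot : ∀ i, ¬X.Adj (u i) (u (i + 3))) : False := by
  obtain ⟨c, hc⟩ := exists_bool_coloring_of_isBipartite hX.isBipartite
  have hcolor (i : Fin 8) : c (u (i + 2)) = c (u i) := by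
    rw [show i + 2 = i + 1 + 1 from (add_assoc i 1 1).symm, hc _ _ (hadj (i + 1)),
      hc _ _ (hadj i), Bool.not_not]
  have hnot_two (i : Fin 8) : ¬X.Adj (u i) (u (i + 2)) := fun h =>
    (Bool.eq_not_self _).1 ((hcolor i).symm.trans (hc _ _ h))
  have hnot_four (i : Fin 8) : ¬X.Adj (u i) (u (i + 4)) := fun h =>
    (Bool.eq_not_self _).1 (((hcolor (i + 2)).trans (hcolor i)).symm.trans <| by
      rw [add_assoc]
      exact hc _ _ h)
  have hback {i k l : Fin 8} (hkl : k + l = 0) (h : X.Adj (u i) (u (i + k))) :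
      X.Adj (u (i + k)) (u (i + k + l)) := by
    rw [add_assoc, hkl, add_zero]
    exact h.symm
  have hiff (i j : Fin 8) : X.Adj (u i) (u j) ↔ (cycleGraph 8).Adj i j := by
    obtain ⟨k, rfl⟩ : ∃ k, j = i + k := ⟨j - i, (add_sub_cancel i j).symm⟩
    rw [cycleGraph_adj, sub_add_cancel_left, add_sub_cancel_left]
    match k with
    | 0 => simp
    | 1 => exact iff_of_true (hadj i) (by decide)
    | 2 => exact iff_of_false (hnot_two i) (by decide)
    | 3 => exact iff_of_false (hnot i) (by decide)
    | 4 => exact iff_of_false (hnot_four i) (by decide)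
    | 5 => exact iff_of_false (fun h => hnot _ (hback rfl h)) (by decide)
    | 6 => exact iff_of_false (fun h => hnot_two _ (hback rfl h)) (by decide)
    | 7 => exact iff_of_true (by simpa [add_assoc] using (hadj (i + 7)).symm) (by decide)
  exact not_isEmpty_iff.2 (nonempty_embedding_of_adj_iff_adj
    (cycleGraph_neighborSet_injective (by norm_num)) hiff) (hX.noLongInducedCycle 8 (by norm_num))

theorem T2Free.false_of_claw (hT : T2Free X) (hX : X.IsBipartite) {z : V} {m l : Fin 3 → V}
    (hz : ∀ i, X.Adj z (m i)) (hml : ∀ i j, X.Adj (m i) (l j) ↔ i = j) : False := by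
  obtain ⟨c, hc⟩ := exists_bool_coloring_of_isBipartite hX
  have hcm (i) : c (m i) = !c z := hc _ _ (hz i)
  have hcl (i) : c (l i) = c z := by rw [hc _ _ ((hml i i).2 rfl), hcm, Bool.not_not]
  have hmm (i j) : ¬X.Adj (m i) (m j) := fun h => by simpa [hcm] using hc _ _ h
  have hll (i j) : ¬X.Adj (l i) (l j) := fun h => by simpa [hcl] using hc _ _ h
  have hzl (i) : ¬X.Adj z (l i) := fun h => by simpa [hcl] using hc _ _ h
  have hlz (i) : ¬X.Adj (l i) z := fun h => hzl i h.symm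
  have hlm (i j) : X.Adj (l j) (m i) ↔ i = j := by rw [X.adj_comm, hml]
  have hiff (i j : Fin 7) : X.Adj (![z, m 0, m 1, m 2, l 0, l 1, l 2] i)
      (![z, m 0, m 1, m 2, l 0, l 1, l 2] j) ↔ bipartiteClaw.Adj i j := by
    fin_cases i <;> fin_cases j <;>
      simp [bipartiteClaw, hz, fun i => (hz i).symm, hml, hlm, hzl, hlz, hmm, hll]
  exact not_isEmpty_iff.2
    (nonempty_embedding_of_adj_iff_adj bipartiteClaw_neighborSet_injective hiff) hT

theorem not_adj_of_common_neighbor (hX : X.IsBipartite) {a b d : V} (hab : X.Adj a b)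
    (hbd : X.Adj b d) : ¬X.Adj a d := by
  obtain ⟨c, hc⟩ := exists_bool_coloring_of_isBipartite hX
  intro had
  have hcolor := hc _ _ had
  rw [hc _ _ hbd, hc _ _ hab] at hcolor
  simp at hcolor

theorem isInducedPath_four (hX : X.IsBipartite) {v : ℕ → V} (h01 : X.Adj (v 0) (v 1))
    (h12 : X.Adj (v 1) (v 2)) (h23 : X.Adj (v 2) (v 3)) (h03 : ¬X.Adj (v 0) (v 3)) :
    IsInducedPath X 4 v := by
  have h02 := not_adj_of_common_neighbor hX h01 h12
  have h13 := not_adj_of_common_neighbor hX h12 h23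
  intro i j hij hj
  interval_cases j <;> interval_cases i <;> simp [*]

end Graph

/-- All vertices of `A` have the same number of neighbors in `B`, and vice versa. -/
structure IsBiregular {V : Type*} (X : SimpleGraph V) (A B : Set V) : Prop where
  ncard_eq_left : ∀ a ∈ A, ∀ a' ∈ A, (X.neighborSet a ∩ B).ncard = (X.neighborSet a' ∩ B).ncard
  ncard_eq_right : ∀ b ∈ B, ∀ b' ∈ B, (X.neighborSet b ∩ A).ncard = (X.neighborSet b' ∩ A).ncard

section Biregular

variable {V : Type*} {X : SimpleGraph V} {A B B' : Set V} {a a' b : V}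

theorem adj_iff_of_neighborSet_inter_eq (h : X.neighborSet a ∩ B = X.neighborSet a' ∩ B)
    (hb : b ∈ B) : X.Adj a b ↔ X.Adj a' b := by
  simpa [hb] using Set.ext_iff.1 h b

theorem neighborSet_inter_eq_empty (h : ∀ b ∈ B, ¬X.Adj a b) : X.neighborSet a ∩ B = ∅ :=
  Set.eq_empty_of_forall_notMem fun b hb => h b hb.2 hb.1

namespace IsBiregular

theorem symm (h : IsBiregular X A B) : IsBiregular X B A :=
  ⟨h.ncard_eq_right, h.ncard_eq_left⟩

variable [Finite V]

theorem exists_adj_not_adj (h : IsBiregular X A B) (ha : a ∈ A) (ha' : a' ∈ A) (hb : b ∈ B)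
    (hab : X.Adj a b) (hab' : ¬X.Adj a' b) : ∃ b' ∈ B, X.Adj a' b' ∧ ¬X.Adj a b' := by
  by_contra! hsub
  have heq : X.neighborSet a' ∩ B = X.neighborSet a ∩ B :=
    Set.eq_of_subset_of_ncard_le (fun b' hb' => ⟨hsub b' hb'.2 hb'.1, hb'.2⟩)
      (h.ncard_eq_left a ha a' ha').le
  exact hab' ((adj_iff_of_neighborSet_inter_eq heq hb).2 hab)

theorem exists_adj (h : IsBiregular X A B) (ha : a ∈ A) (ha' : a' ∈ A) (hb : b ∈ B)
    (hab : X.Adj a b) : ∃ b' ∈ B, X.Adj a' b' := by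
  by_cases hab' : X.Adj a' b
  · exact ⟨b, hb, hab'⟩
  · obtain ⟨b', hb', hadj, -⟩ := h.exists_adj_not_adj ha ha' hb hab hab'
    exact ⟨b', hb', hadj⟩

theorem exists_adj_of_inter_ne (h : IsBiregular X A B) (ha : a ∈ A) (ha' : a' ∈ A)
    (hne : X.neighborSet a ∩ B ≠ X.neighborSet a' ∩ B) : ∃ b ∈ B, X.Adj a b := by
  by_contra! hempty
  have hempty' : ∀ b ∈ B, ¬X.Adj a' b := fun b hb hab => by
    obtain ⟨b', hb', hab'⟩ := h.exists_adj ha' ha hb hab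
    exact hempty b' hb' hab'
  exact hne ((neighborSet_inter_eq_empty hempty).trans (neighborSet_inter_eq_empty hempty').symm)

theorem exists_isInducedPath (hX : IsChordalBipartite X) (h : IsBiregular X A B) {n : ℕ}
    {v : ℕ → V} (hn : 4 ≤ n) (hv : IsInducedPath X n v) (h0 : v 0 ∈ A) (h1 : v 1 ∈ B)
    (h2 : v 2 ∈ A) (h3 : v 3 ∈ B) (k : ℕ) : ∃ u, IsInducedPath X (n + k) u := by
  induction k generalizing A B n v with
  | zero => exact ⟨v, hv⟩
  | succ k ih =>
    have h23 : X.Adj (v 2) (v 3) := hv.adj_succ (by omega)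
    have h03 : ¬X.Adj (v 0) (v 3) := fun hadj => by
      simpa using (hv 0 3 (by omega) (by omega)).1 hadj
    obtain ⟨w, hw, hw0, hw2⟩ := h.exists_adj_not_adj h2 h0 h3 h23 h03
    obtain ⟨u, hu⟩ := ih h.symm (by omega)
      (hv.cons hX hw0.symm fun hadj => hw2 hadj.symm) hw h0 h1 h2
    exact ⟨u, by rwa [Nat.add_assoc, Nat.add_comm 1 k] at hu⟩

theorem neighborSet_inter_eq (hX : IsChordalBipartite X) (h : IsBiregular X A B) (ha : a ∈ A)
    (ha' : a' ∈ A) (hb : b ∈ B) (hab : X.Adj a b) (hab' : X.Adj a' b) :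
    X.neighborSet a ∩ B = X.neighborSet a' ∩ B := by
  refine Set.eq_of_subset_of_ncard_le (fun d hd => ⟨?_, hd.2⟩) (h.ncard_eq_left a' ha' a ha).le
  by_contra had
  let v : ℕ → V := fun | 0 => d | 1 => a | 2 => b | _ => a'
  have hv : IsInducedPath X 4 v :=
    isInducedPath_four hX.isBipartite hd.1.symm hab hab'.symm fun hda => had hda.symm
  obtain ⟨u, hu⟩ := h.symm.exists_isInducedPath hX le_rfl hv hd.2 ha hb ha' (Nat.card V)
  have := hu.le_card (by omega)
  omega

theorem not_adj_of_inter_ne (hX : IsChordalBipartite X) (h : IsBiregular X A B) (ha : a ∈ A)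
    (ha' : a' ∈ A) (hb : b ∈ B) (hne : X.neighborSet a ∩ B ≠ X.neighborSet a' ∩ B)
    (hab : X.Adj a b) : ¬X.Adj a' b :=
  fun hab' => hne (h.neighborSet_inter_eq hX ha ha' hb hab hab')

theorem numClasses_swap_le (hX : IsChordalBipartite X) (h : IsBiregular X A B) (ha : a ∈ A)
    (hb : b ∈ B) (hab : X.Adj a b) : numClasses X B A ≤ numClasses X A B := by
  have hnbr (d : V) (hd : d ∈ B) : ∃ e ∈ A, X.Adj d e := h.symm.exists_adj hb hd ha hab.symm
  choose! f hfA hf using hnbr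
  calc numClasses X B A ≤ ((fun d => X.neighborSet (f d) ∩ B) '' B).ncard :=
        ncard_image_le_ncard_image fun d hd d' hd' heq =>
          h.symm.neighborSet_inter_eq hX hd hd' (hfA d hd) (hf d hd)
            ((adj_iff_of_neighborSet_inter_eq heq hd').2 (hf d' hd').symm).symm
    _ ≤ numClasses X A B := Set.ncard_le_ncard <| by
        rintro _ ⟨d, hd, rfl⟩
        exact ⟨f d, hfA d hd, rfl⟩

theorem false_of_crossing (hX : IsChordalBipartite X) (h : IsBiregular X A B)
    (h' : IsBiregular X A B') {x x' y y' : V} (hx : x ∈ A) (hx' : x' ∈ A) (hy : y ∈ A)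
    (hy' : y' ∈ A) (hxx' : X.neighborSet x ∩ B = X.neighborSet x' ∩ B)
    (hyy' : X.neighborSet y ∩ B = X.neighborSet y' ∩ B)
    (hxy : X.neighborSet x ∩ B' = X.neighborSet y ∩ B')
    (hxy' : X.neighborSet x' ∩ B' = X.neighborSet y' ∩ B')
    (hne : X.neighborSet x ∩ B ≠ X.neighborSet y ∩ B)
    (hne' : X.neighborSet x ∩ B' ≠ X.neighborSet x' ∩ B') : False := by
  obtain ⟨g, hg, hxg⟩ := h.exists_adj_of_inter_ne hx hy hne
  obtain ⟨g', hg', hyg'⟩ := h.exists_adj_of_inter_ne hy hx hne.symm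
  obtain ⟨l, hl, hxl⟩ := h'.exists_adj_of_inter_ne hx hx' hne'
  obtain ⟨l', hl', hxl'⟩ := h'.exists_adj_of_inter_ne hx' hx hne'.symm
  have hxg' := (adj_iff_of_neighborSet_inter_eq hxx' hg).1 hxg
  have hyg := (adj_iff_of_neighborSet_inter_eq hyy' hg').1 hyg'
  have hyl := (adj_iff_of_neighborSet_inter_eq hxy hl).1 hxl
  have hyl' := (adj_iff_of_neighborSet_inter_eq hxy' hl').1 hxl'
  exact hX.false_of_octagon (u := ![x, g, x', l', y', g', y, l])
    (fun
      | 0 => hxg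
      | 1 => hxg'.symm
      | 2 => hxl'
      | 3 => hyl'.symm
      | 4 => hyg
      | 5 => hyg'.symm
      | 6 => hyl
      | 7 => hxl.symm)
    (fun
      | 0 => h'.not_adj_of_inter_ne hX hx' hx hl' hne'.symm hxl'
      | 1 => mt Adj.symm (h.not_adj_of_inter_ne hX hx hy' hg (hyy' ▸ hne) hxg)
      | 2 => h.not_adj_of_inter_ne hX hy hx' hg' (hxx' ▸ hne.symm) hyg'
      | 3 => mt Adj.symm (h'.not_adj_of_inter_ne hX hx' hy hl' (hxy ▸ hne'.symm) hxl')
      | 4 => h'.not_adj_of_inter_ne hX hx hy' hl (hxy' ▸ hne') hxl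
      | 5 => mt Adj.symm (h.not_adj_of_inter_ne hX hy hx hg' hne.symm hyg')
      | 6 => h.not_adj_of_inter_ne hX hx hy hg hne hxg
      | 7 => mt Adj.symm (h'.not_adj_of_inter_ne hX hx hx' hl hne' hxl))

end IsBiregular

end Biregular

section Distance

variable {V : Type*} {X : SimpleGraph V} {α a b : V} {n : ℕ}

theorem dist_le_dist_add_one_of_adj (hconn : X.Connected) (hab : X.Adj a b) :
    X.dist α b ≤ X.dist α a + 1 := by
  rw [← dist_eq_one_iff_adj.2 hab]
  exact hconn.dist_triangle

theorem not_adj_of_dist_add_one_lt (hconn : X.Connected) (h : X.dist α a + 1 < X.dist α b) :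
    ¬X.Adj a b :=
  fun hab => h.not_ge (dist_le_dist_add_one_of_adj hconn hab)

theorem dist_ne_dist_of_adj (hconn : X.Connected) (hX : X.IsBipartite) (hab : X.Adj a b) :
    X.dist α a ≠ X.dist α b := by
  intro heq
  let c : X.Coloring Bool := hX.toColoring (by simp)
  obtain ⟨p, hp⟩ := hconn.exists_walk_length_eq_dist α a
  obtain ⟨q, hq⟩ := hconn.exists_walk_length_eq_dist α b
  have hpq : (c α ↔ c a) ↔ (c α ↔ c b) := by
    rw [← c.even_length_iff_congr p, ← c.even_length_iff_congr q, hp, hq, heq]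
  exact c.valid hab (Bool.eq_iff_iff.2 (by tauto))

theorem exists_adj_dist_eq (hconn : X.Connected) (ha : X.dist α a = n + 1) :
    ∃ b, X.Adj a b ∧ X.dist α b = n := by
  obtain ⟨p, hp⟩ := hconn.exists_walk_length_eq_dist a α
  rw [dist_comm, ha] at hp
  cases p with
  | nil => simp at hp
  | @cons _ b _ hab q =>
    have hle : X.dist α b ≤ n := by
      rw [dist_comm]
      exact (dist_le q).trans (Nat.succ_injective hp).le
    have := dist_le_dist_add_one_of_adj (α := α) hconn hab.symm
    exact ⟨b, hab, by omega⟩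

theorem exists_adj_adj_of_dist_eq (hconn : X.Connected) {z z' : V} (hne : z ≠ z')
    (hz : X.dist α z = n) (hz' : X.dist α z' = n) :
    ∃ p p', X.Adj z p ∧ X.Adj p p' ∧ X.dist α p < n ∧
      ∀ v, X.dist α v = n + 1 → ¬X.Adj v z' → ¬X.Adj v p' := by
  have hroot {v : V} (hv : X.dist α v = 0) : v = α := (hconn.dist_eq_zero_iff.1 hv).symm
  obtain _ | n := n
  · exact absurd ((hroot hz).trans (hroot hz').symm) hne
  obtain ⟨p, hzp, hp⟩ := exists_adj_dist_eq hconn hz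
  by_cases hpz' : X.Adj p z'
  · exact ⟨p, z', hzp, hpz', by omega, fun _ _ h => h⟩
  obtain _ | n := n
  · rw [hroot hp] at hpz'
    exact absurd (dist_eq_one_iff_adj.1 hz') hpz'
  obtain ⟨p', hpp', hp'⟩ := exists_adj_dist_eq hconn hp
  exact ⟨p, p', hzp, hpp', by omega, fun v hv _ =>
    mt Adj.symm (not_adj_of_dist_add_one_lt (α := α) hconn (by omega))⟩

theorem exists_adj_adj_of_not_adj [Finite V] (hX : IsChordalBipartite X) (hconn : X.Connected)
    {A Z : Set V} (hZ : IsBiregular X A Z) (hdistA : ∀ a ∈ A, X.dist α a = n + 1)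
    (hdistZ : ∀ z ∈ Z, X.dist α z = n) {x w z : V} (hx : x ∈ A) (hw : w ∈ A) (hz : z ∈ Z)
    (hxz : X.Adj x z) (hwz : ¬X.Adj w z) :
    ∃ p p', X.Adj z p ∧ X.Adj p p' ∧ X.dist α p < n ∧ ∀ v ∈ A, X.Adj v z → ¬X.Adj v p' := by
  obtain ⟨z', hz', hwz'⟩ := hZ.exists_adj hx hw hz hxz
  have hne : z ≠ z' := fun h => hwz (h ▸ hwz')
  obtain ⟨p, p', hzp, hpp', hp, hp'⟩ :=
    exists_adj_adj_of_dist_eq hconn hne (hdistZ z hz) (hdistZ z' hz')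
  refine ⟨p, p', hzp, hpp', hp, fun v hv hvz => hp' v (hdistA v hv) fun hvz' => hwz ?_⟩
  have hvw := hZ.neighborSet_inter_eq hX hv hw hz' hvz' hwz'
  exact (adj_iff_of_neighborSet_inter_eq hvw hz).1 hvz

theorem neighborSet_inter_eq_of_common_neighbor [Finite V] (hX : IsChordalBipartite X)
    (hconn : X.Connected) (hT : T2Free X) {A B Z : Set V} (hB : IsBiregular X A B)
    (hZ : IsBiregular X A Z) (hdistA : ∀ a ∈ A, X.dist α a = n + 1)
    (hdistB : ∀ b ∈ B, X.dist α b = n + 2) (hdistZ : ∀ z ∈ Z, X.dist α z = n) {x y w z : V}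
    (hx : x ∈ A) (hy : y ∈ A) (hw : w ∈ A) (hz : z ∈ Z) (hxz : X.Adj x z) (hyz : X.Adj y z)
    (hxw : X.neighborSet x ∩ B ≠ X.neighborSet w ∩ B)
    (hyw : X.neighborSet y ∩ B ≠ X.neighborSet w ∩ B) :
    X.neighborSet x ∩ B = X.neighborSet y ∩ B := by
  by_contra hxy
  obtain ⟨b, hb, hxb⟩ := hB.exists_adj_of_inter_ne hx hy hxy
  obtain ⟨b', hb', hyb'⟩ := hB.exists_adj_of_inter_ne hy hx (Ne.symm hxy)
  -- The third arm of the claw runs through `w` if `z` is adjacent to it, else towards `α`.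
  obtain ⟨p, p', hzp, hpp', hpb, hpb', hxp', hyp'⟩ : ∃ p p', X.Adj z p ∧ X.Adj p p' ∧
      ¬X.Adj p b ∧ ¬X.Adj p b' ∧ ¬X.Adj x p' ∧ ¬X.Adj y p' := by
    by_cases hwz : X.Adj w z
    · obtain ⟨q, hq, hwq⟩ := hB.exists_adj_of_inter_ne hw hx hxw.symm
      exact ⟨w, q, hwz.symm, hwq, hB.not_adj_of_inter_ne hX hx hw hb hxw hxb,
        hB.not_adj_of_inter_ne hX hy hw hb' hyw hyb',
        hB.not_adj_of_inter_ne hX hw hx hq hxw.symm hwq,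
        hB.not_adj_of_inter_ne hX hw hy hq hyw.symm hwq⟩
    · obtain ⟨p, p', hzp, hpp', hp, hp'⟩ :=
        exists_adj_adj_of_not_adj hX hconn hZ hdistA hdistZ hx hw hz hxz hwz
      have hpB {d : V} (hd : d ∈ B) : ¬X.Adj p d :=
        not_adj_of_dist_add_one_lt hconn (by rw [hdistB d hd]; omega)
      exact ⟨p, p', hzp, hpp', hpB hb, hpB hb', hp' x hx hxz, hp' y hy hyz⟩
  have hxb' := hB.not_adj_of_inter_ne hX hy hx hb' (Ne.symm hxy) hyb'
  have hyb := hB.not_adj_of_inter_ne hX hx hy hb hxy hxb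
  refine hT.false_of_claw hX.isBipartite (z := z) (m := ![x, y, p]) (l := ![b, b', p']) ?_ ?_
  · simp [Fin.forall_fin_succ, hxz.symm, hyz.symm, hzp]
  · simp [Fin.forall_fin_succ, *]

end Distance

namespace CoherentConfiguration

section BasicRelation

variable {Ω : Type*} {C : CoherentConfiguration Ω} {a b a' b' : Ω} {Δ : Set Ω}

/-- The element of the partition containing the pair `(a, b)`, denoted `r(a, b)` in the
literature. -/
noncomputable def basicRel (C : CoherentConfiguration Ω) (a b : Ω) : C.S :=
  ⟨(C.partition (a, b)).choose, (C.partition (a, b)).choose_spec.1.1⟩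

theorem mem_basicRel : (a, b) ∈ (C.basicRel a b).1 :=
  (C.partition (a, b)).choose_spec.1.2

theorem basicRel_eq_iff_mem {s : C.S} : C.basicRel a b = s ↔ (a, b) ∈ s.1 :=
  ⟨fun h => h ▸ mem_basicRel, fun h =>
    Subtype.ext ((C.partition (a, b)).unique ⟨(C.basicRel a b).2, mem_basicRel⟩ ⟨s.2, h⟩)⟩

theorem mem_of_basicRel_eq (h : C.basicRel a b = C.basicRel a' b') {s : Set (Ω × Ω)}
    (hs : s ∈ C.S) (hab : (a, b) ∈ s) : (a', b') ∈ s :=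
  (basicRel_eq_iff_mem (s := ⟨s, hs⟩)).1 (h ▸ basicRel_eq_iff_mem.2 hab)

theorem basicRel_swap (h : C.basicRel a b = C.basicRel a' b') :
    C.basicRel b a = C.basicRel b' a' :=
  (basicRel_eq_iff_mem.2 (mem_of_basicRel_eq (s := {p | (p.2, p.1) ∈ (C.basicRel b a).1}) h
    (C.converse_mem _ (C.basicRel b a).2) mem_basicRel)).symm

theorem eq_of_basicRel_self_eq (h : C.basicRel a a = C.basicRel b b') : b = b' :=
  C.diag_union _ (C.basicRel a a).2 ⟨_, mem_basicRel, rfl⟩ _ (basicRel_eq_iff_mem.1 h.symm)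

theorem exists_perm_basicRel_eq [Finite Ω] (h : C.basicRel a b = C.basicRel a' b') :
    ∃ σ : Equiv.Perm Ω, ∀ g, C.basicRel a' (σ g) = C.basicRel a g ∧
      C.basicRel (σ g) b' = C.basicRel g b := by
  have hequiv (c : C.S × C.S) : Nonempty ({g // (C.basicRel a g, C.basicRel g b) = c} ≃
      {g // (C.basicRel a' g, C.basicRel g b') = c}) := by
    have hreg := C.regularity c.1 c.1.2 c.2 c.2.2 _ (C.basicRel a b).2 (a, b) mem_basicRel
      (a', b') (basicRel_eq_iff_mem.1 h.symm)
    simp only [← basicRel_eq_iff_mem] at hreg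
    simp only [Prod.ext_iff]
    exact Finite.card_eq.1 hreg
  exact ⟨Equiv.ofFiberEquiv fun c => (hequiv c).some,
    fun g => Prod.mk_inj.1 (Equiv.ofFiberEquiv_map (fun c => (hequiv c).some) g)⟩

theorem basicRel_self_eq_left [Finite Ω] (h : C.basicRel a b = C.basicRel a' b') :
    C.basicRel a a = C.basicRel a' a' := by
  obtain ⟨σ, hσ⟩ := exists_perm_basicRel_eq h
  have hσa : a' = σ a := eq_of_basicRel_self_eq (hσ a).1.symm
  nth_rewrite 2 [hσa]
  exact (hσ a).1.symm

theorem basicRel_self_eq_right [Finite Ω] (h : C.basicRel a b = C.basicRel a' b') :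
    C.basicRel b b = C.basicRel b' b' :=
  basicRel_self_eq_left (basicRel_swap h)

theorem IsFiber.basicRel_self_eq (hΔ : C.IsFiber Δ) (ha : a ∈ Δ) (hb : b ∈ Δ) :
    C.basicRel a a = C.basicRel b b :=
  (basicRel_eq_iff_mem (s := ⟨_, hΔ⟩).2 ⟨rfl, ha⟩).trans
    (basicRel_eq_iff_mem (s := ⟨_, hΔ⟩).2 ⟨rfl, hb⟩).symm

theorem IsFiber.mem_congr (hΔ : C.IsFiber Δ) (h : C.basicRel a a = C.basicRel b b) :
    a ∈ Δ ↔ b ∈ Δ :=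
  ⟨fun ha => (mem_of_basicRel_eq h hΔ ⟨rfl, ha⟩).2,
    fun hb => (mem_of_basicRel_eq h.symm hΔ ⟨rfl, hb⟩).2⟩

theorem exists_isFiber_mem (C : CoherentConfiguration Ω) (a : Ω) : ∃ Δ, C.IsFiber Δ ∧ a ∈ Δ := by
  refine ⟨{b | C.basicRel b b = C.basicRel a a}, ?_, rfl⟩
  rw [IsFiber]
  convert (C.basicRel a a).2
  ext ⟨b, b'⟩
  rw [← basicRel_eq_iff_mem]
  refine ⟨?_, fun h => ?_⟩
  · rintro ⟨hbb' : b = b', h⟩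
    exact hbb' ▸ h
  · obtain rfl := eq_of_basicRel_self_eq h.symm
    exact ⟨rfl, h⟩

end BasicRelation

section Compatible

variable {Ω : Type*} {C : CoherentConfiguration Ω} {X : SimpleGraph Ω} {a b a' b' x y x' y' : Ω}
  {Δ Γ Λ : Set Ω}

theorem Compatible.adj_congr (hC : C.Compatible X) (h : C.basicRel a b = C.basicRel a' b') :
    X.Adj a b ↔ X.Adj a' b' :=
  ⟨fun hab => hC _ (C.basicRel a b).2 ⟨_, mem_basicRel, hab⟩ _ (basicRel_eq_iff_mem.1 h.symm),
    fun hab => hC _ (C.basicRel a' b').2 ⟨_, mem_basicRel, hab⟩ _ (basicRel_eq_iff_mem.1 h)⟩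

theorem exists_isFiber_inter_ne (C : CoherentConfiguration Ω)
    (hne : X.neighborSet x ≠ X.neighborSet y) :
    ∃ Γ, C.IsFiber Γ ∧ X.neighborSet x ∩ Γ ≠ X.neighborSet y ∩ Γ := by
  by_contra! heq
  refine hne (Set.ext fun g => ?_)
  obtain ⟨Γ, hΓ, hg⟩ := C.exists_isFiber_mem g
  exact adj_iff_of_neighborSet_inter_eq (heq Γ hΓ) hg

variable [Finite Ω]

theorem Compatible.mem_neighborSet_inter_congr (hC : C.Compatible X) (hΓ : C.IsFiber Γ)
    (h : C.basicRel a b = C.basicRel a' b') :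
    b ∈ X.neighborSet a ∩ Γ ↔ b' ∈ X.neighborSet a' ∩ Γ :=
  and_congr (hC.adj_congr h) (hΓ.mem_congr (basicRel_self_eq_right h))

theorem Compatible.neighborSet_inter_eq_congr (hC : C.Compatible X) (hΓ : C.IsFiber Γ)
    (h : C.basicRel x y = C.basicRel x' y') :
    X.neighborSet x ∩ Γ = X.neighborSet y ∩ Γ ↔ X.neighborSet x' ∩ Γ = X.neighborSet y' ∩ Γ := by
  obtain ⟨σ, hσ⟩ := exists_perm_basicRel_eq h
  have hmem (g : Ω) : (g ∈ X.neighborSet x ∩ Γ ↔ g ∈ X.neighborSet y ∩ Γ) ↔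
      (σ g ∈ X.neighborSet x' ∩ Γ ↔ σ g ∈ X.neighborSet y' ∩ Γ) :=
    iff_congr (hC.mem_neighborSet_inter_congr hΓ (hσ g).1.symm)
      (hC.mem_neighborSet_inter_congr hΓ (basicRel_swap (hσ g).2).symm)
  rw [Set.ext_iff, Set.ext_iff, forall_congr' hmem]
  exact σ.forall_congr_right (q := fun g =>
    g ∈ X.neighborSet x' ∩ Γ ↔ g ∈ X.neighborSet y' ∩ Γ)

theorem Compatible.exists_neighborSet_inter_eq_ne (hC : C.Compatible X) (hΔ : C.IsFiber Δ)
    (hΓ : C.IsFiber Γ) (hΛ : C.IsFiber Λ) (hx : x ∈ Δ) (hy : y ∈ Δ) (hx' : x' ∈ Δ)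
    (heq : X.neighborSet x ∩ Γ = X.neighborSet y ∩ Γ)
    (hne : X.neighborSet x ∩ Λ ≠ X.neighborSet y ∩ Λ) :
    ∃ y' ∈ Δ, X.neighborSet x' ∩ Γ = X.neighborSet y' ∩ Γ ∧
      X.neighborSet x' ∩ Λ ≠ X.neighborSet y' ∩ Λ := by
  obtain ⟨σ, hσ⟩ := exists_perm_basicRel_eq (hΔ.basicRel_self_eq hx hx')
  have hσy := (hσ y).1.symm
  exact ⟨σ y, (hΔ.mem_congr (basicRel_self_eq_right hσy)).1 hy,
    (hC.neighborSet_inter_eq_congr hΓ hσy).1 heq,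
    mt (hC.neighborSet_inter_eq_congr hΛ hσy).2 hne⟩

theorem Compatible.ncard_neighborSet_inter_eq (hC : C.Compatible X) (hΔ : C.IsFiber Δ)
    (hΓ : C.IsFiber Γ) (hx : x ∈ Δ) (hy : y ∈ Δ) :
    (X.neighborSet x ∩ Γ).ncard = (X.neighborSet y ∩ Γ).ncard := by
  obtain ⟨σ, hσ⟩ := exists_perm_basicRel_eq (hΔ.basicRel_self_eq hx hy)
  have hpre : X.neighborSet x ∩ Γ = σ ⁻¹' (X.neighborSet y ∩ Γ) :=
    Set.ext fun g => hC.mem_neighborSet_inter_congr hΓ (hσ g).1.symm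
  rw [hpre, Set.ncard_preimage_of_injective_subset_range σ.injective (by simp)]

theorem Compatible.isBiregular (hC : C.Compatible X) (hΔ : C.IsFiber Δ) (hΓ : C.IsFiber Γ) :
    IsBiregular X Δ Γ :=
  ⟨fun _ hx _ hy => hC.ncard_neighborSet_inter_eq hΔ hΓ hx hy,
    fun _ hx _ hy => hC.ncard_neighborSet_inter_eq hΓ hΔ hx hy⟩

theorem Compatible.dist_le_length (hC : C.Compatible X) (hconn : X.Connected) (p : X.Walk a b)
    (h : C.basicRel a b = C.basicRel a' b') : X.dist a' b' ≤ p.length := by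
  induction p generalizing a' with
  | nil => exact (hconn.dist_eq_zero_iff.2 (eq_of_basicRel_self_eq h)).le
  | @cons a v b hav q ih =>
    obtain ⟨σ, hσ⟩ := exists_perm_basicRel_eq h
    have hadj : X.Adj a' (σ v) := (hC.adj_congr (hσ v).1).2 hav
    have hle : X.dist b' a' ≤ X.dist b' (σ v) + 1 := dist_le_dist_add_one_of_adj hconn hadj.symm
    rw [dist_comm, dist_comm (v := σ v)] at hle
    exact hle.trans (Nat.succ_le_succ (ih (hσ v).2.symm))

theorem Compatible.dist_eq_dist (hC : C.Compatible X) (hconn : X.Connected)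
    (h : C.basicRel a b = C.basicRel a' b') : X.dist a b = X.dist a' b' := by
  obtain ⟨p, hp⟩ := hconn.exists_walk_length_eq_dist a b
  obtain ⟨q, hq⟩ := hconn.exists_walk_length_eq_dist a' b'
  exact le_antisymm (hq ▸ hC.dist_le_length hconn q h.symm) (hp ▸ hC.dist_le_length hconn p h)

theorem Compatible.dist_eq_dist_of_mem (hC : C.Compatible X) (hconn : X.Connected) {α : Ω}
    (hα : C.Distinguished α) (hΔ : C.IsFiber Δ) (hx : x ∈ Δ) (hy : y ∈ Δ) :
    X.dist α x = X.dist α y := by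
  obtain ⟨σ, hσ⟩ := exists_perm_basicRel_eq (hΔ.basicRel_self_eq hx hy)
  have hself := basicRel_self_eq_left (hσ α).2
  have hσα : σ α = α :=
    congrArg Prod.fst (Set.mem_singleton_iff.1 (mem_of_basicRel_eq hself.symm hα rfl))
  refine hC.dist_eq_dist hconn ?_
  have hσα' := (hσ α).2
  rw [hσα] at hσα'
  exact hσα'.symm

end Compatible

section ChordalBipartite

variable {Ω : Type*} [Finite Ω] {C : CoherentConfiguration Ω} {X : SimpleGraph Ω} {α : Ω}
  {Δ Γ Λ : Set Ω} {x y : Ω}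

theorem Compatible.numClasses_le_two_of_dist (hC : C.Compatible X) (hX : IsChordalBipartite X)
    (hconn : X.Connected) (hT : T2Free X) (hα : C.Distinguished α) {n : ℕ} (hΔ : C.IsFiber Δ)
    (hΓ : C.IsFiber Γ) (hdistΔ : ∀ d ∈ Δ, X.dist α d = n) (hdistΓ : ∀ g ∈ Γ, X.dist α g = n + 1) :
    numClasses X Δ Γ ≤ 2 := by
  induction n generalizing Δ Γ with
  | zero =>
    have hroot (d : Ω) (hd : d ∈ Δ) : d = α := (hconn.dist_eq_zero_iff.1 (hdistΔ d hd)).symm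
    exact ncard_image_le_two_iff.2 fun x hx y hy _ _ => Or.inl (by rw [hroot x hx, hroot y hy])
  | succ n ih =>
    obtain rfl | ⟨d, hd⟩ := Δ.eq_empty_or_nonempty
    · simp [numClasses]
    obtain ⟨z, hdz, hz⟩ := exists_adj_dist_eq hconn (hdistΔ d hd)
    obtain ⟨Z, hZ, hzZ⟩ := C.exists_isFiber_mem z
    have hdistZ (y : Ω) (hy : y ∈ Z) : X.dist α y = n :=
      (hC.dist_eq_dist_of_mem hconn hα hZ hy hzZ).trans hz
    have hΔZ := hC.isBiregular hΔ hZ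
    by_contra! hlt
    have hrefine (u : Ω) (hu : u ∈ Δ) (v : Ω) (hv : v ∈ Δ)
        (huv : X.neighborSet u ∩ Z = X.neighborSet v ∩ Z) :
        X.neighborSet u ∩ Γ = X.neighborSet v ∩ Γ := by
      have hpair : ({X.neighborSet u ∩ Γ, X.neighborSet v ∩ Γ} : Set (Set Ω)).ncard ≤ 2 := by
        simpa only [Set.ncard_singleton] using
          Set.ncard_insert_le (X.neighborSet u ∩ Γ) {X.neighborSet v ∩ Γ}
      obtain ⟨_, ⟨w, hw, rfl⟩, hwuv⟩ := Set.exists_mem_notMem_of_ncard_lt_ncard (hpair.trans_lt hlt)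
      simp only [Set.mem_insert_iff, Set.mem_singleton_iff, not_or] at hwuv
      obtain ⟨y, hy, huy⟩ := hΔZ.exists_adj hd hu hzZ hdz
      exact neighborSet_inter_eq_of_common_neighbor hX hconn hT (hC.isBiregular hΔ hΓ) hΔZ hdistΔ
        hdistΓ hdistZ hu hv hw hy huy ((adj_iff_of_neighborSet_inter_eq huv hy).1 huy)
        (Ne.symm hwuv.1) (Ne.symm hwuv.2)
    refine hlt.not_ge ?_
    calc numClasses X Δ Γ ≤ numClasses X Δ Z := ncard_image_le_ncard_image hrefine
      _ ≤ numClasses X Z Δ := hΔZ.symm.numClasses_swap_le hX hzZ hd hdz.symm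
      _ ≤ 2 := ih hZ hΔ hdistZ hdistΔ

theorem Compatible.numClasses_le_two (hC : C.Compatible X) (hX : IsChordalBipartite X)
    (hconn : X.Connected) (hT : T2Free X) (hα : C.Distinguished α) (hΔ : C.IsFiber Δ)
    (hΓ : C.IsFiber Γ) : numClasses X Δ Γ ≤ 2 := by
  by_cases hadj : ∃ d ∈ Δ, ∃ g ∈ Γ, X.Adj d g
  · obtain ⟨d, hd, g, hg, hdg⟩ := hadj
    have hdistΔ (x : Ω) (hx : x ∈ Δ) := hC.dist_eq_dist_of_mem hconn hα hΔ hx hd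
    have hdistΓ (x : Ω) (hx : x ∈ Γ) := hC.dist_eq_dist_of_mem hconn hα hΓ hx hg
    rcases (dist_ne_dist_of_adj (α := α) hconn hX.isBipartite hdg).lt_or_gt with hlt | hlt
    · have hg' : X.dist α g = X.dist α d + 1 :=
        (dist_le_dist_add_one_of_adj hconn hdg).antisymm hlt
      exact hC.numClasses_le_two_of_dist hX hconn hT hα hΔ hΓ hdistΔ fun x hx =>
        (hdistΓ x hx).trans hg'
    · have hd' : X.dist α d = X.dist α g + 1 :=
        (dist_le_dist_add_one_of_adj hconn hdg.symm).antisymm hlt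
      exact ((hC.isBiregular hΓ hΔ).numClasses_swap_le hX hg hd hdg.symm).trans
        (hC.numClasses_le_two_of_dist hX hconn hT hα hΓ hΔ hdistΓ fun x hx =>
          (hdistΔ x hx).trans hd')
  · push Not at hadj
    exact ncard_image_le_two_iff.2 fun x hx y hy _ _ => Or.inl <|
      (neighborSet_inter_eq_empty (hadj x hx)).trans (neighborSet_inter_eq_empty (hadj y hy)).symm

theorem Compatible.neighborSet_inter_eq_of_inter_ne (hC : C.Compatible X)
    (hX : IsChordalBipartite X) (hconn : X.Connected) (hT : T2Free X) (hα : C.Distinguished α)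
    (hΔ : C.IsFiber Δ) (hΓ : C.IsFiber Γ) (hΛ : C.IsFiber Λ) {u v : Ω} (hu : u ∈ Δ) (hv : v ∈ Δ)
    (heq : X.neighborSet u ∩ Γ = X.neighborSet v ∩ Γ)
    (hne : X.neighborSet u ∩ Λ ≠ X.neighborSet v ∩ Λ) (hx : x ∈ Δ) (hy : y ∈ Δ) :
    X.neighborSet x ∩ Γ = X.neighborSet y ∩ Γ := by
  by_contra hxy
  obtain ⟨x', hx', hxx', hnex⟩ := hC.exists_neighborSet_inter_eq_ne hΔ hΓ hΛ hu hv hx heq hne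
  obtain ⟨y', hy', hyy', hney⟩ := hC.exists_neighborSet_inter_eq_ne hΔ hΓ hΛ hu hv hy heq hne
  have htwo := ncard_image_le_two_iff.1 (hC.numClasses_le_two hX hconn hT hα hΔ hΛ)
  have hΔΓ := hC.isBiregular hΔ hΓ
  have hΔΛ := hC.isBiregular hΔ hΛ
  by_cases hxyΛ : X.neighborSet x ∩ Λ = X.neighborSet y ∩ Λ
  · have hxy' : X.neighborSet x' ∩ Λ = X.neighborSet y' ∩ Λ :=
      ((htwo x hx x' hx' y' hy').resolve_left hnex).resolve_left (hxyΛ ▸ hney)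
    exact hΔΓ.false_of_crossing hX hΔΛ hx hx' hy hy' hxx' hyy' hxyΛ hxy' hxy hnex
  · have hxy' : X.neighborSet x ∩ Λ = X.neighborSet y' ∩ Λ :=
      ((htwo x hx y hy y' hy').resolve_left hxyΛ).resolve_right hney
    have hyx' : X.neighborSet x' ∩ Λ = X.neighborSet y ∩ Λ :=
      (((htwo x hx x' hx' y hy).resolve_left hnex).resolve_left hxyΛ)
    exact hΔΓ.false_of_crossing hX hΔΛ hx hx' hy' hy hxx' hyy'.symm hxy' hyx' (hyy' ▸ hxy) hnex

theorem Compatible.ncard_neighborSet_image_le_two (hC : C.Compatible X)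
    (hX : IsChordalBipartite X) (hconn : X.Connected) (hT : T2Free X) (hα : C.Distinguished α)
    (hΔ : C.IsFiber Δ) : (X.neighborSet '' Δ).ncard ≤ 2 := by
  refine ncard_image_le_two_iff.2 fun x hx y hy z hz => or_iff_not_imp_left.2 fun hxy => ?_
  obtain ⟨Γ, hΓ, hxyΓ⟩ := C.exists_isFiber_inter_ne hxy
  have hlift {u v : Ω} (hu : u ∈ Δ) (hv : v ∈ Δ)
      (huv : X.neighborSet u ∩ Γ = X.neighborSet v ∩ Γ) : X.neighborSet u = X.neighborSet v := by
    by_contra hne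
    obtain ⟨Λ, hΛ, hneΛ⟩ := C.exists_isFiber_inter_ne hne
    exact hxyΓ (hC.neighborSet_inter_eq_of_inter_ne hX hconn hT hα hΔ hΓ hΛ hu hv huv hneΛ hx hy)
  have htwo := ncard_image_le_two_iff.1 (hC.numClasses_le_two hX hconn hT hα hΔ hΓ)
  exact ((htwo x hx y hy z hz).resolve_left hxyΓ).imp (hlift hx hz) (hlift hy hz)

end ChordalBipartite

end CoherentConfiguration

theorem isTwin_of_neighborSet_eq {V : Type*} {X : SimpleGraph V} {u u' v : V}
    (h : X.neighborSet u = X.neighborSet u') (huv : IsTwin X u v) : IsTwin X u' v := by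
  have hadj (w : V) : X.Adj u w ↔ X.Adj u' w := Set.ext_iff.1 h w
  intro w hwu' hwv
  rw [← hadj]
  by_cases hwu : w = u
  · subst hwu
    refine iff_of_false X.irrefl fun hvw => X.irrefl ((hadj u').1 ?_)
    have hvu' : X.Adj v u' := ((hadj v).1 hvw.symm).symm
    exact (huv u' hwu'.symm hvu'.ne').2 hvu'
  · exact huv w hwu hwv

theorem setOf_isTwin_eq {V : Type*} {X : SimpleGraph V} {u v : V}
    (h : X.neighborSet u = X.neighborSet v) : {w | IsTwin X u w} = {w | IsTwin X v w} :=
  Set.ext fun _ => ⟨isTwin_of_neighborSet_eq h, isTwin_of_neighborSet_eq h.symm⟩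

theorem stmt_13 {Ω : Type*} [Fintype Ω] (X : SimpleGraph Ω) (P Q : Set Ω)
    (hconn : X.Connected) (hbip : IsBipartition X P Q) (hchordal : NoLongInducedCycle X)
    (hT2 : T2Free X)
    (α : Ω) (C : CoherentConfiguration Ω)
    (hcomp : C.Compatible X) (hdist : C.Distinguished α)
    (Δ : Set Ω) (hΔ : C.IsFiber Δ) :
    ((fun δ => X.neighborSet δ) '' Δ).ncard ≤ 2 ∧
      ((fun δ => {γ : Ω | IsTwin X δ γ}) '' Δ).ncard ≤ 2 := by
  have h := hcomp.ncard_neighborSet_image_le_two ⟨hbip.isBipartite, hchordal⟩ hconn hT2 hdist hΔ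
  exact ⟨h, (ncard_image_le_ncard_image fun _ _ _ _ => setOf_isTwin_eq).trans h⟩
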